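/- Let n ≥ 2 and let −L, G be the Dirichlet MAC matrices. Let ε ∈ ℝ and A_ε := I + ε²·(−L). Suppose β ∈ (0,1] is such that β²·⟨(−L)·(G·p), G·p⟩ ≤ ⟨G·Gᵀ·(G·p), G·p⟩ for every p ∈ ℝ^{n²}. Then for every p ∈ ℝ^{n²}: β²·⟨A_ε·(G·p), G·p⟩ ≤ ⟨G·p, G·p⟩ + ε²·⟨G·Gᵀ·(G·p), G·p⟩ ≤ ⟨A_ε·(G·p), G·p⟩. (The middle quantity equals ⟨G·𝕊⁻¹·Gᵀ·u, u⟩ for u = G·p, where 𝕊⁻¹ = (Gᵀ·G)⁺ + ε²·I is the Cahouet–Chabard approximate inverse Schur complement.) -/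

import Mathlib

/-!
The identity term and the Laplacian term of `A_ε` are compared separately. For the lower bound,
`β² ≤ 1` handles `⟨u, u⟩` and the assumed inf-sup inequality handles `⟨-L u, u⟩`. The upper bound
is `G Gᵀ ≤ -L` as quadratic forms (`graddiv_le`), a consequence of the discrete vector identity
`-L = G Gᵀ + Cᵀ C + 2 Fᵀ F` (`negL_eq`), where `C` is the discrete curl and `F` the projection onto
the velocities next to a tangential wall. It rests on the one-dimensional identities
`T_D = B_Dᵀ B_D` and `T_E = B_D B_Dᵀ + 2 E₀`; the off-diagonal blocks of `G Gᵀ` and `Cᵀ C` cancel.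
-/

open Matrix Kronecker

/-- `(n-1)×(n-1)` tridiagonal matrix with `2` on the diagonal and `-1` on the sub/super-diagonal. -/
noncomputable def TD (n : ℕ) : Matrix (Fin (n - 1)) (Fin (n - 1)) ℝ := fun i j =>
  if i = j then 2 else if (i : ℕ) + 1 = (j : ℕ) ∨ (j : ℕ) + 1 = (i : ℕ) then -1 else 0

/-- `n×n` tridiagonal matrix with diagonal `(3,2,…,2,3)` and `-1` on the sub/super-diagonal. -/
noncomputable def TE (n : ℕ) : Matrix (Fin n) (Fin n) ℝ := fun i j =>
  if i = j then (if (i : ℕ) = 0 ∨ (i : ℕ) = n - 1 then 3 else 2)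
  else if (i : ℕ) + 1 = (j : ℕ) ∨ (j : ℕ) + 1 = (i : ℕ) then -1 else 0

/-- `n×n` diagonal matrix `diag(1,0,…,0,1)`. -/
noncomputable def E0 (n : ℕ) : Matrix (Fin n) (Fin n) ℝ := fun i j =>
  if i = j ∧ ((i : ℕ) = 0 ∨ (i : ℕ) = n - 1) then 1 else 0

/-- `n×(n-1)` bidiagonal matrix with `(B_D)_{i,i} = -1`, `(B_D)_{i+1,i} = 1`. -/
noncomputable def BD (n : ℕ) : Matrix (Fin n) (Fin (n - 1)) ℝ := fun i j =>
  if (i : ℕ) = (j : ℕ) then -1 else if (i : ℕ) = (j : ℕ) + 1 then 1 else 0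

/-- Discrete negative vector Laplacian of the Dirichlet MAC discretization
(`h = 1`, `μ = 1`). -/
noncomputable def negL (n : ℕ) :
    Matrix ((Fin n × Fin (n - 1)) ⊕ (Fin (n - 1) × Fin n))
      ((Fin n × Fin (n - 1)) ⊕ (Fin (n - 1) × Fin n)) ℝ :=
  Matrix.fromBlocks
    ((1 : Matrix (Fin n) (Fin n) ℝ) ⊗ₖ TD n + TE n ⊗ₖ (1 : Matrix (Fin (n - 1)) (Fin (n - 1)) ℝ))
    0 0
    ((1 : Matrix (Fin (n - 1)) (Fin (n - 1)) ℝ) ⊗ₖ TE n + TD n ⊗ₖ (1 : Matrix (Fin n) (Fin n) ℝ))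

/-- Discrete gradient of the Dirichlet MAC discretization: `I_n ⊗ B_Dᵀ` stacked on top of
`B_Dᵀ ⊗ I_n`. -/
noncomputable def Gmac (n : ℕ) :
    Matrix ((Fin n × Fin (n - 1)) ⊕ (Fin (n - 1) × Fin n)) (Fin n × Fin n) ℝ :=
  Matrix.fromRows ((1 : Matrix (Fin n) (Fin n) ℝ) ⊗ₖ (BD n)ᵀ)
    ((BD n)ᵀ ⊗ₖ (1 : Matrix (Fin n) (Fin n) ℝ))

/-- One-dimensional factorization of the Dirichlet Laplacian on interior faces. -/
lemma TD_eq (n : ℕ) : TD n = (BD n)ᵀ * BD n := by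
  ext i j
  have hi := i.2
  have hj := j.2
  simp only [Matrix.mul_apply, Matrix.transpose_apply, BD, TD]
  rw [Fin.sum_univ_eq_sum_range (fun k : ℕ =>
    (if k = (i : ℕ) then (-1 : ℝ) else if k = (i : ℕ) + 1 then 1 else 0) *
      (if k = (j : ℕ) then (-1 : ℝ) else if k = (j : ℕ) + 1 then 1 else 0)) n]
  -- Only the two cells adjacent to face `i` contribute.
  have h : ∀ k ∈ Finset.range n,
      (if k = (i : ℕ) then (-1 : ℝ) else if k = (i : ℕ) + 1 then 1 else 0) *
        (if k = (j : ℕ) then (-1 : ℝ) else if k = (j : ℕ) + 1 then 1 else 0) =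
      (if k = (i : ℕ) then
        -(if (i : ℕ) = (j : ℕ) then (-1 : ℝ) else if (i : ℕ) = (j : ℕ) + 1 then 1 else 0) else 0) +
      (if k = (i : ℕ) + 1 then
        (if (i : ℕ) + 1 = (j : ℕ) then (-1 : ℝ) else
          if (i : ℕ) + 1 = (j : ℕ) + 1 then 1 else 0) else 0) := by
    intro k _
    by_cases h1 : k = (i : ℕ)
    · subst h1; simp; split_ifs <;> norm_num
    · by_cases h2 : k = (i : ℕ) + 1 <;> simp [h1, h2]
  rw [Finset.sum_congr rfl h, Finset.sum_add_distrib, Finset.sum_ite_eq', Finset.sum_ite_eq',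
    if_pos (Finset.mem_range.2 (by omega)), if_pos (Finset.mem_range.2 (by omega))]
  simp only [Fin.ext_iff]
  split_ifs <;> first | omega | norm_num

/-- `B_D B_Dᵀ` is the Neumann Laplacian, with corner entries `1`; the reflection used for the
tangential Dirichlet condition adds `2` there. For `n = 1` the two corners coincide and the
identity fails. -/
lemma TE_eq (n : ℕ) (hn : 2 ≤ n) : TE n = BD n * (BD n)ᵀ + (2 : ℝ) • E0 n := by
  ext i j
  have hi := i.2
  have hj := j.2
  simp only [Matrix.add_apply, Matrix.smul_apply, Matrix.mul_apply, Matrix.transpose_apply,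
    BD, TE, E0]
  rw [Fin.sum_univ_eq_sum_range (fun k : ℕ =>
    (if (i : ℕ) = k then (-1 : ℝ) else if (i : ℕ) = k + 1 then 1 else 0) *
      (if (j : ℕ) = k then (-1 : ℝ) else if (j : ℕ) = k + 1 then 1 else 0)) (n - 1)]
  -- Only the faces `i - 1` and `i` of cell `i` contribute; the first is absent when `i = 0`.
  have h : ∀ k ∈ Finset.range (n - 1),
      (if (i : ℕ) = k then (-1 : ℝ) else if (i : ℕ) = k + 1 then 1 else 0) *
        (if (j : ℕ) = k then (-1 : ℝ) else if (j : ℕ) = k + 1 then 1 else 0) =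
      (if k = (i : ℕ) then
        -(if (j : ℕ) = (i : ℕ) then (-1 : ℝ) else if (j : ℕ) = (i : ℕ) + 1 then 1 else 0) else 0) +
      (if k = (i : ℕ) - 1 then
        (if (i : ℕ) = 0 then (0 : ℝ) else if (j : ℕ) + 1 = (i : ℕ) then -1 else
          if (j : ℕ) = (i : ℕ) then 1 else 0) else 0) := by
    intro k _
    split_ifs <;> first | omega | norm_num
  rw [Finset.sum_congr rfl h, Finset.sum_add_distrib, Finset.sum_ite_eq', Finset.sum_ite_eq']
  simp only [Fin.ext_iff, Finset.mem_range, smul_eq_mul]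
  split_ifs <;> first | omega | norm_num

lemma E0_transpose (n : ℕ) : (E0 n)ᵀ = E0 n := by
  ext i j
  simp only [Matrix.transpose_apply, E0]
  by_cases h : i = j
  · subst h; rfl
  · simp [h, Ne.symm h]

lemma E0_mul_self (n : ℕ) : E0 n * E0 n = E0 n := by
  have h : E0 n = Matrix.diagonal
      (fun i : Fin n => if (i : ℕ) = 0 ∨ (i : ℕ) = n - 1 then (1 : ℝ) else 0) := by
    ext i j
    by_cases hij : i = j <;> simp [E0, hij]
  rw [h, Matrix.diagonal_mul_diagonal]
  congr 1
  ext i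
  split_ifs <;> norm_num

/-- The discrete scalar curl: faces to interior vertices. -/
noncomputable def Cmac (n : ℕ) :
    Matrix (Fin (n - 1) × Fin (n - 1)) ((Fin n × Fin (n - 1)) ⊕ (Fin (n - 1) × Fin n)) ℝ :=
  Matrix.fromCols ((BD n)ᵀ ⊗ₖ (1 : Matrix (Fin (n - 1)) (Fin (n - 1)) ℝ))
    (-((1 : Matrix (Fin (n - 1)) (Fin (n - 1)) ℝ) ⊗ₖ (BD n)ᵀ))

/-- The orthogonal projection onto the velocity unknowns whose tangential neighbour is the
boundary. -/
noncomputable def Fmac (n : ℕ) :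
    Matrix ((Fin n × Fin (n - 1)) ⊕ (Fin (n - 1) × Fin n))
      ((Fin n × Fin (n - 1)) ⊕ (Fin (n - 1) × Fin n)) ℝ :=
  Matrix.fromBlocks (E0 n ⊗ₖ (1 : Matrix (Fin (n - 1)) (Fin (n - 1)) ℝ)) 0 0
    ((1 : Matrix (Fin (n - 1)) (Fin (n - 1)) ℝ) ⊗ₖ E0 n)

/-- The discrete identity `-Δ = -∇ div + curlᵀ curl`, up to a nonnegative boundary correction. -/
lemma negL_eq (n : ℕ) (hn : 2 ≤ n) :
    negL n = Gmac n * (Gmac n)ᵀ + (Cmac n)ᵀ * Cmac n + (2 : ℝ) • ((Fmac n)ᵀ * Fmac n) := by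
  simp only [negL, Gmac, Cmac, Fmac, Matrix.transpose_fromRows, Matrix.transpose_fromCols,
    Matrix.fromRows_mul_fromCols, Matrix.fromBlocks_transpose, Matrix.fromBlocks_multiply,
    ← Matrix.kroneckerMap_transpose, Matrix.transpose_neg, Matrix.transpose_one,
    Matrix.transpose_zero, Matrix.transpose_transpose, Matrix.mul_neg, Matrix.neg_mul, neg_neg,
    ← Matrix.mul_kronecker_mul, Matrix.mul_one, Matrix.one_mul, Matrix.fromBlocks_add,
    Matrix.fromBlocks_smul, E0_transpose, E0_mul_self, Matrix.mul_zero, Matrix.zero_mul,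
    add_zero, zero_add, smul_zero, add_neg_cancel]
  rw [TD_eq, TE_eq n hn]
  simp only [Matrix.add_kronecker, Matrix.kronecker_add, Matrix.smul_kronecker,
    Matrix.kronecker_smul]
  congr 1 <;> abel

lemma gram_nonneg {m k : Type*} [Fintype m] [Fintype k] (A : Matrix m k ℝ) (u : k → ℝ) :
    0 ≤ (Aᵀ * A) *ᵥ u ⬝ᵥ u := by
  have h : (Aᵀ * A) *ᵥ u ⬝ᵥ u = A *ᵥ u ⬝ᵥ A *ᵥ u := by
    rw [← Matrix.mulVec_mulVec, Matrix.mulVec_transpose, ← Matrix.dotProduct_mulVec]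
  rw [h]
  exact Finset.sum_nonneg fun i _ => mul_self_nonneg _

/-- `G Gᵀ ≤ -L` as quadratic forms, on all velocities. -/
lemma graddiv_le (n : ℕ) (hn : 2 ≤ n) (u : (Fin n × Fin (n - 1)) ⊕ (Fin (n - 1) × Fin n) → ℝ) :
    (Gmac n * (Gmac n)ᵀ) *ᵥ u ⬝ᵥ u ≤ negL n *ᵥ u ⬝ᵥ u := by
  have h1 := gram_nonneg (Cmac n) u
  have h2 := gram_nonneg (Fmac n) u
  rw [negL_eq n hn, Matrix.add_mulVec, Matrix.add_mulVec, Matrix.smul_mulVec, add_dotProduct,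
    add_dotProduct, smul_dotProduct, smul_eq_mul]
  linarith

/-- with `A_ε = I + ε²(-L)` and an inf-sup constant `β ∈ (0,1]` for the
range of `G`, the quantity `⟨G 𝕊⁻¹ Gᵀ u, u⟩ = ⟨u, u⟩ + ε² ⟨G Gᵀ u, u⟩` (for `u = G p`)
is sandwiched between `β² ⟨A_ε u, u⟩` and `⟨A_ε u, u⟩`. -/
theorem stmt_17 (n : ℕ) (hn : 2 ≤ n) (ε : ℝ) (β : ℝ) (hβ0 : 0 < β) (hβ1 : β ≤ 1)
    (hinfsup : ∀ p : Fin n × Fin n → ℝ,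
      β ^ 2 * ((negL n).mulVec ((Gmac n).mulVec p) ⬝ᵥ (Gmac n).mulVec p) ≤
        (Gmac n * (Gmac n)ᵀ).mulVec ((Gmac n).mulVec p) ⬝ᵥ (Gmac n).mulVec p) :
    ∀ p : Fin n × Fin n → ℝ,
      β ^ 2 * ((1 + ε ^ 2 • negL n).mulVec ((Gmac n).mulVec p) ⬝ᵥ (Gmac n).mulVec p) ≤
        ((Gmac n).mulVec p ⬝ᵥ (Gmac n).mulVec p) +
          ε ^ 2 * ((Gmac n * (Gmac n)ᵀ).mulVec ((Gmac n).mulVec p) ⬝ᵥ (Gmac n).mulVec p) ∧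
      ((Gmac n).mulVec p ⬝ᵥ (Gmac n).mulVec p) +
          ε ^ 2 * ((Gmac n * (Gmac n)ᵀ).mulVec ((Gmac n).mulVec p) ⬝ᵥ (Gmac n).mulVec p) ≤
        (1 + ε ^ 2 • negL n).mulVec ((Gmac n).mulVec p) ⬝ᵥ (Gmac n).mulVec p := by
  intro p
  have hp := hinfsup p
  have hle := graddiv_le n hn ((Gmac n).mulVec p)
  set u := (Gmac n).mulVec p
  have hu : 0 ≤ u ⬝ᵥ u := Finset.sum_nonneg fun i _ => mul_self_nonneg _
  have hε : 0 ≤ ε ^ 2 := sq_nonneg ε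
  have hβ : β ^ 2 ≤ 1 := pow_le_one₀ hβ0.le hβ1
  rw [Matrix.add_mulVec, Matrix.one_mulVec, Matrix.smul_mulVec, add_dotProduct, smul_dotProduct,
    smul_eq_mul]
  constructor
  · have h1 := mul_le_mul_of_nonneg_left hp hε
    have h2 := mul_le_mul_of_nonneg_right hβ hu
    linarith
  · have h1 := mul_le_mul_of_nonneg_left hle hε
    linarith
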